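/- arXiv:1301.5290 — 8 statements merged into one kernel-verified Lean document; each statement's English description precedes it below -/
import Mathlib

section
/- Let N ≥ 1 be an integer, Z ⊆ ℝ^N a nonempty bounded convex set with finite positive Lebesgue measure vol(Z), let ε > 0 and t > 0 be real numbers, and let g : Z → ℝ be a continuous concave function with |g(z)| ≤ εt for all z ∈ Z. Suppose that ∫_Z e^{g(z)} dz ≤ 2 e^{(ε²/3)t} vol(Z), and that α is a real number satisfying 0 < α < 4εt and e^{α/2} (α/(4εt))^N vol(Z) > 1. Then e^{g(z)} ≤ 2 e^{(ε²/3)t + α} vol(Z) for every z ∈ Z. -/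
open MeasureTheory

/-!
Let `c = α / (4εt)`. Concavity and `|g| ≤ εt` give `g ≥ g z - 2cεt = g z - α / 2` on the image of
`Z` under the homothety of ratio `c` centred at `z`, a subset of `Z` of volume `c ^ N * vol Z`.
By Markov's inequality `e ^ (g z - α / 2) * c ^ N * vol Z` is at most the integral of `exp ∘ g`, and
multiplying by `e ^ α` leaves on the left `e ^ g z` times a factor that is assumed to exceed `1`.

Measurability of `g` on `Z` holds because a concave function is continuous on the interior of its
domain and the frontier of a convex set is null.
-/

open Module

lemma sub_mul_le_apply_homothety_of_concaveOn {E : Type*} [AddCommGroup E] [Module ℝ E]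
    {s : Set E} {g : E → ℝ} (hg : ConcaveOn ℝ s g) {z x : E} (hz : z ∈ s) (hx : x ∈ s) {c D : ℝ}
    (hc₀ : 0 ≤ c) (hc₁ : c ≤ 1) (hD : g z - g x ≤ D) :
    g z - c * D ≤ g (AffineMap.homothety z c x) := by
  rw [AffineMap.homothety_eq_lineMap, AffineMap.lineMap_apply_module]
  calc g z - c * D ≤ g z - c * (g z - g x) := by gcongr
    _ = (1 - c) • g z + c • g x := by simp only [smul_eq_mul]; ring
    _ ≤ g ((1 - c) • z + c • x) := hg.2 hz hx (sub_nonneg.mpr hc₁) hc₀ (sub_add_cancel 1 c)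

section AddHaar

variable {E : Type*} [NormedAddCommGroup E] [NormedSpace ℝ E] [FiniteDimensional ℝ E]
  [MeasurableSpace E] [BorelSpace E] {μ : Measure E} [μ.IsAddHaarMeasure]
  {s : Set E} {g : E → ℝ} {z : E} {c D : ℝ}

lemma aestronglyMeasurable_restrict_of_concaveOn (hg : ConcaveOn ℝ s g) :
    AEStronglyMeasurable g (μ.restrict s) := by
  have hinterior : interior s =ᵐ[μ] s :=
    interior_ae_eq_of_null_frontier (hg.1.addHaar_frontier μ)
  rw [← Measure.restrict_congr_set hinterior]
  exact hg.continuousOn_interior.aestronglyMeasurable isOpen_interior.measurableSet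

lemma integrableOn_exp_of_concaveOn (hg : ConcaveOn ℝ s g) (hs : μ s ≠ ⊤)
    (hbdd : BddAbove (g '' s)) : IntegrableOn (fun x ↦ Real.exp (g x)) s μ := by
  obtain ⟨M, hM⟩ := hbdd
  have hmeas : AEStronglyMeasurable (fun x ↦ Real.exp (g x)) (μ.restrict s) :=
    Real.continuous_exp.comp_aestronglyMeasurable (aestronglyMeasurable_restrict_of_concaveOn hg)
  refine IntegrableOn.of_bound hs.lt_top hmeas (Real.exp M) ?_
  filter_upwards [ae_restrict_mem₀ (hg.1.nullMeasurableSet μ)] with x hx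
  rw [Real.norm_eq_abs, Real.abs_exp]
  exact Real.exp_le_exp.mpr (hM (Set.mem_image_of_mem g hx))

lemma ofReal_pow_mul_measure_le_measure_superlevel_of_concaveOn (hg : ConcaveOn ℝ s g)
    (hz : z ∈ s) (hc₀ : 0 ≤ c) (hc₁ : c ≤ 1) (hD : ∀ x ∈ s, g z - g x ≤ D) :
    ENNReal.ofReal (c ^ finrank ℝ E) * μ s ≤ μ ({y | g z - c * D ≤ g y} ∩ s) := by
  have himage : AffineMap.homothety z c '' s ⊆ {y | g z - c * D ≤ g y} ∩ s := by
    rintro _ ⟨x, hx, rfl⟩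
    refine ⟨sub_mul_le_apply_homothety_of_concaveOn hg hz hx hc₀ hc₁ (hD x hx), ?_⟩
    rw [AffineMap.homothety_eq_lineMap]
    exact hg.1.lineMap_mem hz hx ⟨hc₀, hc₁⟩
  calc ENNReal.ofReal (c ^ finrank ℝ E) * μ s = μ (AffineMap.homothety z c '' s) := by
        rw [Measure.addHaar_image_homothety, abs_of_nonneg (pow_nonneg hc₀ _)]
    _ ≤ μ ({y | g z - c * D ≤ g y} ∩ s) := measure_mono himage

lemma exp_sub_mul_le_setIntegral_exp_of_concaveOn (hg : ConcaveOn ℝ s g) (hs : μ s ≠ ⊤)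
    (hbdd : BddAbove (g '' s)) (hz : z ∈ s) (hc₀ : 0 ≤ c) (hc₁ : c ≤ 1)
    (hD : ∀ x ∈ s, g z - g x ≤ D) :
    Real.exp (g z - c * D) * (c ^ finrank ℝ E * μ.real s) ≤ ∫ x in s, Real.exp (g x) ∂μ := by
  have : Fact (μ s < ⊤) := ⟨hs.lt_top⟩
  have hsuper : c ^ finrank ℝ E * μ.real s ≤ (μ.restrict s).real {y | g z - c * D ≤ g y} := by
    have h := ENNReal.toReal_mono (measure_ne_top (μ.restrict s) _)
      ((ofReal_pow_mul_measure_le_measure_superlevel_of_concaveOn hg hz hc₀ hc₁ hD).trans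
        (Measure.le_restrict_apply s _))
    rwa [ENNReal.toReal_mul, ENNReal.toReal_ofReal (pow_nonneg hc₀ _)] at h
  calc Real.exp (g z - c * D) * (c ^ finrank ℝ E * μ.real s)
      ≤ Real.exp (g z - c * D) * (μ.restrict s).real {y | g z - c * D ≤ g y} := by gcongr
    _ = Real.exp (g z - c * D) *
          (μ.restrict s).real {y | Real.exp (g z - c * D) ≤ Real.exp (g y)} := by
        simp only [Real.exp_le_exp]
    _ ≤ ∫ x in s, Real.exp (g x) ∂μ :=
        mul_meas_ge_le_integral_of_nonneg (.of_forall fun _ ↦ (Real.exp_pos _).le)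
          (integrableOn_exp_of_concaveOn hg hs hbdd) _

theorem stmt_0_general (hg : ConcaveOn ℝ s g) (hs : μ s ≠ ⊤)
    (hD : ∀ x ∈ s, ∀ y ∈ s, g x - g y ≤ D) {K α : ℝ}
    (hint : ∫ x in s, Real.exp (g x) ∂μ ≤ K * μ.real s) (hα₀ : 0 < α) (hαD : α ≤ 2 * D)
    (hα : 1 ≤ Real.exp (α / 2) * (α / (2 * D)) ^ finrank ℝ E * μ.real s) (hz : z ∈ s) :
    Real.exp (g z) ≤ K * Real.exp α * μ.real s := by
  have hD₀ : 0 < D := by linarith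
  have hbdd : BddAbove (g '' s) :=
    ⟨g z + D, Set.forall_mem_image.mpr fun x hx ↦ sub_le_iff_le_add'.mp (hD x hx z hz)⟩
  set c := α / (2 * D) with hc
  have hc₁ : c ≤ 1 := (div_le_one (by positivity)).mpr hαD
  have hexp : Real.exp (g z) * Real.exp (α / 2) = Real.exp α * Real.exp (g z - c * D) := by
    have hcD : c * D = α / 2 := by rw [hc]; field_simp
    rw [← Real.exp_add, ← Real.exp_add, hcD]
    ring_nf
  calc Real.exp (g z)
      ≤ Real.exp (g z) * (Real.exp (α / 2) * c ^ finrank ℝ E * μ.real s) :=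
        le_mul_of_one_le_right (Real.exp_pos _).le hα
    _ = Real.exp α * (Real.exp (g z - c * D) * (c ^ finrank ℝ E * μ.real s)) := by
        linear_combination c ^ finrank ℝ E * μ.real s * hexp
    _ ≤ Real.exp α * ∫ x in s, Real.exp (g x) ∂μ := by
        gcongr
        exact exp_sub_mul_le_setIntegral_exp_of_concaveOn hg hs hbdd hz (by positivity) hc₁
          (hD z hz)
    _ ≤ Real.exp α * (K * μ.real s) := mul_le_mul_of_nonneg_left hint (Real.exp_pos α).le
    _ = K * Real.exp α * μ.real s := by ring

end AddHaar

/-- Lemma 2 of the paper: a pointwise bound on `e^{g(z)}` over a bounded convex set `Z`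
from a bound on its integral, for a bounded continuous concave function `g`. -/
theorem stmt_0 {N : ℕ} (hN : 1 ≤ N) (Z : Set (Fin N → ℝ))
    (hZne : Z.Nonempty) (hZbd : Bornology.IsBounded Z) (hZconv : Convex ℝ Z)
    (hvol_pos : 0 < volume Z) (hvol_fin : volume Z < ⊤)
    (ε t : ℝ) (hε : 0 < ε) (ht : 0 < t)
    (g : (Fin N → ℝ) → ℝ) (hgcont : ContinuousOn g Z) (hgconc : ConcaveOn ℝ Z g)
    (hgbd : ∀ z ∈ Z, |g z| ≤ ε * t)
    (hint : ∫ z in Z, Real.exp (g z) ≤ 2 * Real.exp (ε ^ 2 / 3 * t) * (volume Z).toReal)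
    (α : ℝ) (hα0 : 0 < α) (hα1 : α < 4 * ε * t)
    (hα2 : 1 < Real.exp (α / 2) * (α / (4 * ε * t)) ^ N * (volume Z).toReal) :
    ∀ z ∈ Z, Real.exp (g z) ≤ 2 * Real.exp (ε ^ 2 / 3 * t + α) * (volume Z).toReal := by
  have hosc : ∀ x ∈ Z, ∀ y ∈ Z, g x - g y ≤ 2 * (ε * t) := fun x hx y hy ↦ by
    linarith [(abs_le.mp (hgbd x hx)).2, (abs_le.mp (hgbd y hy)).1]
  have hscale : 2 * (2 * (ε * t)) = 4 * ε * t := by ring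
  rw [Real.exp_add, ← mul_assoc]
  exact fun z hz ↦ stmt_0_general hgconc hvol_fin.ne hosc hint hα0 (hscale ▸ hα1.le)
    (by rw [hscale, finrank_fin_fun]; exact hα2.le) hz
end

section
/- Let Z ⊆ ℝ^N be a convex set, M > 0 a real number, g : Z → ℝ a continuous concave function with |g(z)| ≤ M for all z ∈ Z, let z* ∈ Z, and let α be a real with 0 < α < 4M. Set λ* = α/(4M) and Z⁺ = {z ∈ Z : g(z) ≥ g(z*) − α/2}. Then Z is contained in the dilation {z* + (1/λ*)(z − z*) : z ∈ Z⁺} of Z⁺ about z*. -/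
/-!
Contract `Z` towards `z*` by the factor `λ* = α / (4 * M)`. The image stays in `Z` by convexity,
and by concavity `g` loses at most `λ* * (g z* - g z) ≤ λ* * (2 * M) = α / 2` at the image of `z`.
So `Z` contracts into `Z⁺`, and the inverse dilation covers `Z`.
-/

section Concave

variable {𝕜 E β : Type*} [AddCommGroup E] [AddCommGroup β] [PartialOrder β] [IsOrderedAddMonoid β]
  {s : Set E} {f : E → β} {x y : E} {t : 𝕜} {D : β}

theorem sub_smul_le_map_homothety_of_concaveOn [CommRing 𝕜] [PartialOrder 𝕜]
    [IsOrderedAddMonoid 𝕜] [Module 𝕜 E] [Module 𝕜 β] [PosSMulMono 𝕜 β]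
    (hf : ConcaveOn 𝕜 s f) (hx : x ∈ s) (hy : y ∈ s)
    (ht₀ : 0 ≤ t) (ht₁ : t ≤ 1) (hD : f x - f y ≤ D) :
    f x - t • D ≤ f (AffineMap.homothety x t y) :=
  calc
    f x - t • D ≤ f x - t • (f x - f y) := by gcongr
    _ = (1 - t) • f x + t • f y := by module
    _ ≤ f ((1 - t) • x + t • y) := hf.2 hx hy (sub_nonneg.2 ht₁) ht₀ (sub_add_cancel 1 t)
    _ = f (AffineMap.homothety x t y) := by
      rw [AffineMap.homothety_eq_lineMap, AffineMap.lineMap_apply_module]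

theorem subset_image_homothety_inv_superlevel_of_concaveOn [Field 𝕜] [PartialOrder 𝕜]
    [IsOrderedRing 𝕜] [Module 𝕜 E] [Module 𝕜 β] [PosSMulMono 𝕜 β]
    (hf : ConcaveOn 𝕜 s f) (hx : x ∈ s)
    (ht₀ : 0 < t) (ht₁ : t ≤ 1) (hD : ∀ y ∈ s, f x - f y ≤ D) :
    s ⊆ AffineMap.homothety x t⁻¹ '' {z ∈ s | f x - t • D ≤ f z} := by
  intro y hy
  have hmem : AffineMap.homothety x t y ∈ s := by
    rw [AffineMap.homothety_eq_lineMap]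
    exact hf.1.lineMap_mem hx hy ⟨ht₀.le, ht₁⟩
  have hinv : AffineMap.homothety x t⁻¹ (AffineMap.homothety x t y) = y := by
    rw [← AffineMap.homothety_mul_apply, inv_mul_cancel₀ ht₀.ne', AffineMap.homothety_one,
      AffineMap.id_apply]
  exact ⟨_, ⟨hmem, sub_smul_le_map_homothety_of_concaveOn hf hx hy ht₀.le ht₁ (hD y hy)⟩, hinv⟩

end Concave

theorem stmt_1_general {𝕜 E : Type*} [Field 𝕜] [LinearOrder 𝕜] [IsStrictOrderedRing 𝕜]
    [AddCommGroup E] [Module 𝕜 E] {Z : Set E} {M : 𝕜} {g : E → 𝕜} (hgconc : ConcaveOn 𝕜 Z g)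
    {zstar : E} (hzstar : zstar ∈ Z) (hdrop : ∀ z ∈ Z, g zstar - g z ≤ 2 * M)
    {α : 𝕜} (hα0 : 0 < α) (hα1 : α ≤ 4 * M) :
    Z ⊆ (fun z => zstar + (1 / (α / (4 * M))) • (z - zstar)) ''
      {z ∈ Z | g zstar - α / 2 ≤ g z} := by
  have h4M : 0 < 4 * M := hα0.trans_le hα1
  have hM : M ≠ 0 := right_ne_zero_of_mul h4M.ne'
  have hloss : (α / (4 * M)) • (2 * M) = α / 2 := by
    rw [smul_eq_mul]
    field_simp
    norm_num
  have hcover := subset_image_homothety_inv_superlevel_of_concaveOn hgconc hzstar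
    (div_pos hα0 h4M) ((div_le_one h4M).2 hα1) hdrop
  have hdilation : ⇑(AffineMap.homothety zstar (α / (4 * M))⁻¹) =
      fun z => zstar + (1 / (α / (4 * M))) • (z - zstar) := by
    ext z
    rw [AffineMap.homothety_apply, vsub_eq_sub, vadd_eq_add, add_comm, one_div]
  rwa [hdilation, hloss] at hcover

/-- Key geometric claim in the proof of Lemma 2 of the paper: for a continuous concave
function `g` bounded by `M` on a convex set `Z`, the whole set `Z` is contained in the
dilation of the superlevel set `Z⁺ = {z ∈ Z : g(z) ≥ g(z*) − α/2}` about `z*` by the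
factor `1/λ* = 4M/α`. -/
theorem stmt_1 {N : ℕ} (Z : Set (Fin N → ℝ)) (hZconv : Convex ℝ Z)
    (M : ℝ) (hM : 0 < M)
    (g : (Fin N → ℝ) → ℝ) (hgcont : ContinuousOn g Z) (hgconc : ConcaveOn ℝ Z g)
    (hgbd : ∀ z ∈ Z, |g z| ≤ M)
    (zstar : Fin N → ℝ) (hzstar : zstar ∈ Z)
    (α : ℝ) (hα0 : 0 < α) (hα1 : α < 4 * M) :
    Z ⊆ (fun z => zstar + (1 / (α / (4 * M))) • (z - zstar)) ''
      {z ∈ Z | g zstar - α / 2 ≤ g z} :=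
  stmt_1_general hgconc hzstar
    (fun z hz => by linarith [abs_le.1 (hgbd zstar hzstar), abs_le.1 (hgbd z hz)]) hα0 hα1.le
end

section
/- There exists an absolute constant C > 0 with the following property: for every real ε ∈ (0,1), every integer N ≥ 1, every real R ≥ 2, and every real V with R^{−N} ≤ V ≤ R^N, there exist real numbers α and t satisfying simultaneously (i) 0 < α < 4εt, (ii) e^{α/2} (α/(4εt))^N V > 1, (iii) t ≥ (6/ε²)(α + max{0, ln(2V)}), and (iv) t ≤ C (N/ε²) ln(R/ε). -/
/-!
Put `x = N * log (R / ε)` and take `α = 14 * x`. As `2 ≤ R / ε` and `V ≤ (R / ε) ^ N`, the term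
`max 0 (log (2 * V))` is at most `2 * x`, so `t = 6 / ε ^ 2 * (α + 2 * x)` satisfies (4.3).
For this choice `α / (4 * ε * t) = 7 * ε / 192`, while `exp (α / 2) = (R / ε) ^ (7 * N)`. Six of the
seven factors `R / ε` outweigh the constant `192 / 7 < 2 ^ 6`, and the last one pays for
`ε` and for `V ≥ R ^ (-N)`.
-/

theorem one_lt_exp_mul_rpow_mul {R r s d V : ℝ} (hR : 0 < R) (hr : 0 < r) (hd : 0 < d)
    (hV : (R ^ d)⁻¹ ≤ V) (h : R < Real.exp s * r) :
    1 < Real.exp (s * d) * r ^ d * V := by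
  have hpow : R ^ d < Real.exp (s * d) * r ^ d := by
    rw [Real.exp_mul, ← Real.mul_rpow (Real.exp_pos s).le hr.le]
    exact Real.rpow_lt_rpow hR.le h hd
  calc 1 < Real.exp (s * d) * r ^ d * (R ^ d)⁻¹ := by
        rwa [← div_eq_mul_inv, one_lt_div (by positivity)]
    _ ≤ Real.exp (s * d) * r ^ d * V := by gcongr

theorem lt_exp_mul_log_div_mul {c k ε R : ℝ} (hε : 0 < ε) (hR : 0 < R)
    (h : 1 < c * (R / ε) ^ k) :
    R < Real.exp ((k + 1) * Real.log (R / ε)) * (c * ε) := by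
  have hq : 0 < R / ε := by positivity
  calc R < R * (c * (R / ε) ^ k) := lt_mul_of_one_lt_right hR h
    _ = (R / ε) ^ (k + 1) * (c * ε) := by
      rw [Real.rpow_add_one hq.ne']
      field_simp
    _ = Real.exp ((k + 1) * Real.log (R / ε)) * (c * ε) := by
      rw [Real.rpow_def_of_pos hq, mul_comm (Real.log _)]

theorem max_zero_log_mul_le {c q d V : ℝ} (hc : 0 < c) (hcq : c ≤ q) (hq : 1 ≤ q) (hd : 1 ≤ d)
    (hV : 0 < V) (hVq : V ≤ q ^ d) :
    max 0 (Real.log (c * V)) ≤ 2 * (d * Real.log q) := by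
  have hq_log : 0 ≤ Real.log q := Real.log_nonneg hq
  have hc_log : Real.log c ≤ d * Real.log q :=
    (Real.log_le_log hc hcq).trans (le_mul_of_one_le_left hq_log hd)
  have hV_log : Real.log V ≤ d * Real.log q := by
    rw [← Real.log_rpow (by positivity)]
    exact Real.log_le_log hV hVq
  rw [Real.log_mul hc.ne' hV.ne']
  exact max_le (by positivity) (by linarith)

theorem div_four_mul_mul_six_div_sq_mul_add {ε x : ℝ} (hε : ε ≠ 0) (hx : x ≠ 0) (a b : ℝ) :
    a * x / (4 * ε * (6 / ε ^ 2 * (a * x + b * x))) = a * ε / (24 * (a + b)) := by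
  rw [← add_mul]
  field_simp
  ring

theorem stmt_3_general : ∃ C : ℝ, 0 < C ∧
    ∀ (ε : ℝ), 0 < ε → ε ≤ 1 → ∀ (d : ℝ), 1 ≤ d → ∀ (R : ℝ), 2 ≤ R →
    ∀ (V : ℝ), (R ^ d)⁻¹ ≤ V → V ≤ R ^ d →
    ∃ α t : ℝ, (0 < α ∧ α < 4 * ε * t) ∧
      1 < Real.exp (α / 2) * (α / (4 * ε * t)) ^ d * V ∧
      6 / ε ^ 2 * (α + max 0 (Real.log (2 * V))) ≤ t ∧
      t ≤ C * (d / ε ^ 2) * Real.log (R / ε) := by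
  refine ⟨96, by norm_num, fun ε hε hε1 d hd R hR V hRV hVR => ?_⟩
  have hR0 : 0 < R := by linarith
  have hRq : R ≤ R / ε := le_div_self hR0.le hε hε1
  have hq : 2 ≤ R / ε := hR.trans hRq
  have hV : 0 < V := lt_of_lt_of_le (by positivity) hRV
  have hlog : max 0 (Real.log (2 * V)) ≤ 2 * (d * Real.log (R / ε)) :=
    max_zero_log_mul_le two_pos hq (by linarith) hd hV (hVR.trans (by gcongr))
  have hpow : 1 < 7 / 192 * (R / ε) ^ (6 : ℝ) :=
    calc (1 : ℝ) < 7 / 192 * 2 ^ (6 : ℝ) := by norm_num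
      _ ≤ 7 / 192 * (R / ε) ^ (6 : ℝ) := by gcongr
  have hgain := one_lt_exp_mul_rpow_mul hR0 (by positivity) (by linarith) hRV
    (lt_exp_mul_log_div_mul hε hR0 hpow)
  have hx : 0 < d * Real.log (R / ε) := mul_pos (by linarith) (Real.log_pos (by linarith))
  set x := d * Real.log (R / ε) with hx_def
  have hratio : 14 * x / (4 * ε * (6 / ε ^ 2 * (14 * x + 2 * x))) = 7 / 192 * ε := by
    rw [div_four_mul_mul_six_div_sq_mul_add hε.ne' hx.ne']
    ring
  have hα : 14 * x / 2 = (6 + 1) * Real.log (R / ε) * d := by rw [hx_def]; ring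
  refine ⟨14 * x, 6 / ε ^ 2 * (14 * x + 2 * x), ⟨by positivity, ?_⟩, ?_, by gcongr, ?_⟩
  · rw [← div_lt_one (by positivity), hratio]
    linarith
  · rwa [hratio, hα]
  · exact le_of_eq (by rw [hx_def]; ring)

/-- Lemma 4 of the paper: for any `ε ∈ (0,1)`, `N ≥ 1`, `R ≥ 2` and volume `V` with
`R^{-N} ≤ V ≤ R^N`, there exist `α` and `t = O((N/ε²) ln(R/ε))` satisfying the three
conditions (4.1), (4.2), (4.3) needed for convergence of the randomized fictitious play. -/
theorem stmt_3 : ∃ C : ℝ, 0 < C ∧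
    ∀ (ε : ℝ), 0 < ε → ε < 1 → ∀ (N : ℕ), 1 ≤ N → ∀ (R : ℝ), 2 ≤ R →
    ∀ (V : ℝ), (R ^ N)⁻¹ ≤ V → V ≤ R ^ N →
    ∃ α t : ℝ, (0 < α ∧ α < 4 * ε * t) ∧
      1 < Real.exp (α / 2) * (α / (4 * ε * t)) ^ N * V ∧
      6 / ε ^ 2 * (α + max 0 (Real.log (2 * V))) ≤ t ∧
      t ≤ C * ((N : ℝ) / ε ^ 2) * Real.log (R / ε) := by
  obtain ⟨C, hC, h⟩ := stmt_3_general
  exact ⟨C, hC, fun ε hε hε1 N hN => mod_cast h ε hε hε1.le N (mod_cast hN)⟩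
end

section
/- Let ε ∈ (0,1) be real, N ≥ 1 an integer, and V a real with 0 < V ≤ 1/2. Define α = 2(N ln(25/ε) − ln V) and t = 6α/ε². Then (i) 0 < α < 4εt, (ii) e^{α/2} (α/(4εt))^N V > 1, and (iii) t ≥ (6/ε²)(α + max{0, ln(2V)}). -/
/-!
Let `k` and `c` stand for the constants `6` and `25`. The choice `t = kα/ε²` makes the ratio
`α/(4εt)` equal to `ε/(4k)`, whatever `α` is, and the choice of `α` gives `e^{α/2} V = (c/ε)^N`.
Hence the left side of the second condition is `(c/(4k))^N`, which exceeds `1` as soon as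
`c > 4k`. The third condition is an equality because `V ≤ 1/2` annihilates `max 0 (ln (2V))`.
-/

open Real

lemma exp_nat_mul_log_sub_log {x v : ℝ} (hx : 0 < x) (hv : 0 < v) (n : ℕ) :
    exp (n * log x - log v) = x ^ n / v := by
  rw [exp_sub, exp_log hv, exp_nat_mul, exp_log hx]

lemma nat_mul_log_sub_log_pos {x v : ℝ} (hx : 1 ≤ x) (hv0 : 0 < v) (hv1 : v < 1) (n : ℕ) :
    0 < n * log x - log v :=
  sub_pos.2 <| (log_neg hv0 hv1).trans_le <| mul_nonneg n.cast_nonneg (log_nonneg hx)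

lemma one_lt_exp_nat_mul_log_sub_log_mul_pow_mul {x y v : ℝ} (hx : 0 < x) (hxy : 1 < x * y)
    (hv : 0 < v) {n : ℕ} (hn : n ≠ 0) :
    1 < exp (n * log x - log v) * y ^ n * v :=
  calc
    1 < (x * y) ^ n := one_lt_pow₀ hxy hn
    _ = x ^ n / v * y ^ n * v := by rw [mul_pow]; field_simp
    _ = exp (n * log x - log v) * y ^ n * v := by rw [exp_nat_mul_log_sub_log hx hv]

lemma div_four_mul_mul_div_sq {α : ℝ} (hα : α ≠ 0) (k ε : ℝ) :
    α / (4 * ε * (k * α / ε ^ 2)) = ε / (4 * k) := by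
  field_simp

theorem stmt_4_general {c k ε : ℝ} (hε0 : 0 < ε) (hεk : ε < 4 * k) (hkc : 4 * k < c)
    {N : ℕ} (hN : 1 ≤ N) {V : ℝ} (hV0 : 0 < V) (hV : V ≤ 1 / 2) {α t : ℝ}
    (hα : α = 2 * (N * log (c / ε) - log V)) (ht : t = k * α / ε ^ 2) :
    (0 < α ∧ α < 4 * ε * t) ∧
      1 < exp (α / 2) * (α / (4 * ε * t)) ^ N * V ∧
      k / ε ^ 2 * (α + max 0 (log (2 * V))) ≤ t := by
  have hk : 0 < k := by linarith
  have hc : 1 < c / ε := (one_lt_div hε0).2 (hεk.trans hkc)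
  have hα0 : 0 < α := by
    linarith [nat_mul_log_sub_log_pos hc.le hV0 (by linarith) N]
  have ht0 : 0 < t := by rw [ht]; positivity
  have hratio : α / (4 * ε * t) = ε / (4 * k) := ht ▸ div_four_mul_mul_div_sq hα0.ne' k ε
  refine ⟨⟨hα0, ?_⟩, ?_, ?_⟩
  · rw [← div_lt_one (by positivity), hratio]
    exact (div_lt_one (by positivity)).2 hεk
  · have hhalf : α / 2 = N * log (c / ε) - log V := by linarith
    have hprod : 1 < c / ε * (ε / (4 * k)) := by
      rw [div_mul_div_cancel₀ hε0.ne']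
      exact (one_lt_div (by positivity)).2 hkc
    rw [hratio, hhalf]
    exact one_lt_exp_nat_mul_log_sub_log_mul_pow_mul (by positivity) hprod hV0 (by lia)
  · have hlog : log (2 * V) ≤ 0 := log_nonpos (by positivity) (by linarith)
    rw [max_eq_left hlog, add_zero, ht, div_mul_eq_mul_div]

/-- The small-volume case (`vol(Z) ≤ 1/2`) of Lemma 4 of the paper: the explicit choices
`α = 2(N ln(25/ε) − ln V)` and `t = 6α/ε²` satisfy conditions (4.1), (4.2), (4.3). -/
theorem stmt_4 (ε : ℝ) (hε0 : 0 < ε) (hε1 : ε < 1) (N : ℕ) (hN : 1 ≤ N)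
    (V : ℝ) (hV0 : 0 < V) (hV : V ≤ 1 / 2)
    (α t : ℝ)
    (hα : α = 2 * ((N : ℝ) * Real.log (25 / ε) - Real.log V))
    (ht : t = 6 * α / ε ^ 2) :
    (0 < α ∧ α < 4 * ε * t) ∧
      1 < Real.exp (α / 2) * (α / (4 * ε * t)) ^ N * V ∧
      6 / ε ^ 2 * (α + max 0 (Real.log (2 * V))) ≤ t :=
  stmt_4_general hε0 (by linarith) (by norm_num) hN hV0 hV hα ht
end

section
/- Let ε ∈ (0,1) be real, N ≥ 1 an integer, and V a real with V > 1/2. Define α = max{4(ln 2 + N ln(24/ε)), 2√(N ln(2V))} and t = (6/ε²)(α + ln(2V)). Then (i) 0 < α < 4εt, (ii) e^{α/2} (α/(4εt))^N V > 1, and (iii) t ≥ (6/ε²)(α + max{0, ln(2V)}). -/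
/-!
Since `4εt = (24/ε)(α + L)` with `L = ln(2V)`, condition (4.2) compares `e^{α/2} V` with
`(24/ε)^N (1 + L/α)^N`. The exponential budget `α/2` is split into two halves: the first bound on
`α` is `2 (24/ε)^N ≤ e^{α/4}`, while `(1 + L/α)^N ≤ e^{NL/α}` is at most `e^{α/4}` by the second
bound, which says `4NL ≤ α²`. The remaining factor `2V` exceeds `1`.
-/

lemma mul_rpow_le_exp_iff {b c d x : ℝ} (hb : 0 < b) (hc : 0 < c) :
    b * c ^ d ≤ Real.exp x ↔ Real.log b + d * Real.log c ≤ x := by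
  rw [← Real.log_le_iff_le_exp (by positivity), Real.log_mul hb.ne' (by positivity),
    Real.log_rpow hc]

lemma one_add_rpow_le_exp_mul {x d : ℝ} (hx : -1 ≤ x) (hd : 0 ≤ d) :
    (1 + x) ^ d ≤ Real.exp (d * x) := by
  rw [mul_comm, Real.exp_mul, add_comm]
  exact Real.rpow_le_rpow (by linarith) (Real.add_one_le_exp x) hd

lemma one_add_div_rpow_le_exp_of_sqrt_le {d L a : ℝ} (hd : 0 ≤ d) (hL : 0 ≤ L) (ha : 0 < a)
    (hsqrt : 2 * √(d * L) ≤ a) : (1 + L / a) ^ d ≤ Real.exp (a / 4) := by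
  have hsq : d * L ≤ (a / 2) ^ 2 := (Real.sqrt_le_left (by positivity)).1 (by linarith)
  have hquot : d * (L / a) ≤ a / 4 := by
    rw [← mul_div_assoc, div_le_iff₀ ha]
    linarith
  calc (1 + L / a) ^ d ≤ Real.exp (d * (L / a)) :=
        one_add_rpow_le_exp_mul (neg_one_lt_zero.le.trans (by positivity)) hd
    _ ≤ Real.exp (a / 4) := Real.exp_le_exp.2 hquot

lemma le_exp_mul_div_rpow {b c d L a : ℝ} (hb : 0 < b) (hc : 0 < c) (hd : 0 ≤ d) (hL : 0 ≤ L)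
    (ha : 0 < a) (hlog : Real.log b + d * Real.log c ≤ a / 4) (hsqrt : 2 * √(d * L) ≤ a) :
    b ≤ Real.exp (a / 2) * (a / (c * (a + L))) ^ d := by
  have hfactor : a / (c * (a + L)) = (c * (1 + L / a))⁻¹ := by field_simp
  rw [hfactor, Real.inv_rpow (by positivity), ← div_eq_mul_inv, le_div_iff₀ (by positivity)]
  calc b * (c * (1 + L / a)) ^ d = b * c ^ d * (1 + L / a) ^ d := by
        rw [Real.mul_rpow hc.le (by positivity), mul_assoc]
    _ ≤ Real.exp (a / 4) * Real.exp (a / 4) := by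
        gcongr
        · exact (mul_rpow_le_exp_iff hb hc).2 hlog
        · exact one_add_div_rpow_le_exp_of_sqrt_le hd hL ha hsqrt
    _ = Real.exp (a / 2) := by rw [← Real.exp_add]; ring_nf

theorem stmt_5_general {ε d V α t : ℝ} (hε0 : 0 < ε) (hε : ε ≤ 24) (hd : 0 ≤ d) (hV : 1 / 2 < V)
    (hα : max (4 * (Real.log 2 + d * Real.log (24 / ε))) (2 * √(d * Real.log (2 * V))) ≤ α)
    (ht : t = 6 / ε ^ 2 * (α + Real.log (2 * V))) :
    (0 < α ∧ α < 4 * ε * t) ∧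
      1 < Real.exp (α / 2) * (α / (4 * ε * t)) ^ d * V ∧
      6 / ε ^ 2 * (α + max 0 (Real.log (2 * V))) ≤ t := by
  obtain ⟨hlog, hsqrt⟩ := max_le_iff.1 hα
  have hL : 0 < Real.log (2 * V) := Real.log_pos (by linarith)
  have hc : 1 ≤ 24 / ε := (one_le_div hε0).2 hε
  have hα0 : 0 < α := by
    have hlog_two := Real.log_pos one_lt_two
    have hd_log := mul_nonneg hd (Real.log_nonneg hc)
    linarith
  have h4εt : 4 * ε * t = 24 / ε * (α + Real.log (2 * V)) := by
    rw [ht]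
    field_simp
    ring
  rw [h4εt]
  refine ⟨⟨hα0, ?_⟩, ?_, by rw [max_eq_right hL.le, ht]⟩
  · exact (lt_add_of_pos_right α hL).trans_le (le_mul_of_one_le_left (by positivity) hc)
  · have htwo_le := le_exp_mul_div_rpow two_pos (one_pos.trans_le hc) hd hL.le hα0
      (by linarith) hsqrt
    calc 1 < 2 * V := by linarith
      _ ≤ _ := by gcongr

/-- The large-volume case (`vol(Z) > 1/2`) of Lemma 4 of the paper: the explicit choices
`α = max{4(ln 2 + N ln(24/ε)), 2√(N ln(2V))}` and `t = (6/ε²)(α + ln(2V))` satisfy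
conditions (4.1), (4.2), (4.3). -/
theorem stmt_5 (ε : ℝ) (hε0 : 0 < ε) (hε1 : ε < 1) (N : ℕ) (hN : 1 ≤ N)
    (V : ℝ) (hV : 1 / 2 < V)
    (α t : ℝ)
    (hα : α = max (4 * (Real.log 2 + (N : ℝ) * Real.log (24 / ε)))
      (2 * Real.sqrt ((N : ℝ) * Real.log (2 * V))))
    (ht : t = 6 / ε ^ 2 * (α + Real.log (2 * V))) :
    (0 < α ∧ α < 4 * ε * t) ∧
      1 < Real.exp (α / 2) * (α / (4 * ε * t)) ^ N * V ∧
      6 / ε ^ 2 * (α + max 0 (Real.log (2 * V))) ≤ t := by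
  simpa only [Real.rpow_natCast] using stmt_5_general hε0 (by linarith) N.cast_nonneg hV hα.ge ht
end

section
/- Let X ⊆ ℝ^m be a nonempty bounded convex set of finite positive Lebesgue measure, Y ⊆ ℝ^n a convex set, and F : X × Y → ℝ a continuous function with |F(ξ,η)| ≤ 1 for all (ξ,η) and such that F(ξ,·) is concave on Y for every ξ ∈ X. Let ε ∈ (0,1], t ≥ 0 be reals, let y, η ∈ Y, and set y' = (t/(t+1)) y + (1/(t+1)) η (which lies in Y by convexity). Then ∫_X e^{−(ε(t+1)/2) F(ξ, y')} dξ ≤ ∫_X e^{−(εt/2) F(ξ, y)} (1 + ε²/6 − (ε/2) F(ξ, η)) dξ. -/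
open MeasureTheory

/-!
With weight `1 / (t + 1)` on the new point, concavity gives
`(t + 1) F(ξ, y') ≥ t F(ξ, y) + F(ξ, η)`. The potential at `y'` is therefore pointwise at most the
potential at `y` times `exp (-(ε / 2) F(ξ, η))`, and the exponent of this last factor lies in
`[-1/2, 1/2]`, where the exponential is at most `1 + δ + (2/3) δ²`.
-/

lemma exp_le_one_add_add_two_thirds_mul_sq {δ : ℝ} (hδ : |δ| ≤ 1 / 2) :
    Real.exp δ ≤ 1 + δ + 2 / 3 * δ ^ 2 := by
  have taylor : |Real.exp δ - (1 + δ + δ ^ 2 / 2)| ≤ |δ| ^ 3 * (2 / 9) := by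
    have h := Real.exp_bound (x := δ) (by linarith) (n := 3) (by norm_num)
    norm_num [Finset.sum_range_succ, Nat.factorial] at h
    exact h
  have cube_le : |δ| ^ 3 ≤ 1 / 2 * δ ^ 2 := by
    rw [pow_succ', sq_abs]
    gcongr
  linarith [(abs_le.mp taylor).2, sq_nonneg δ]

lemma exp_neg_half_mul_le {ε b : ℝ} (hε : |ε| ≤ 1) (hb : |b| ≤ 1) :
    Real.exp (-(ε / 2) * b) ≤ 1 + ε ^ 2 / 6 - ε / 2 * b := by
  have abs_mul_le : |ε * b| ≤ 1 := by
    rw [abs_mul]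
    exact mul_le_one₀ hε (abs_nonneg b) hb
  have exponent_le : |-(ε / 2) * b| ≤ 1 / 2 := by
    rw [show -(ε / 2) * b = -(ε * b) / 2 by ring, abs_div, abs_neg, abs_two]
    gcongr
  have sq_mul_sq_le : ε ^ 2 * b ^ 2 ≤ ε ^ 2 :=
    mul_le_of_le_one_right (sq_nonneg ε) ((sq_le_one_iff_abs_le_one b).mpr hb)
  linarith [exp_le_one_add_add_two_thirds_mul_sq exponent_le]

section Average

variable {V : Type*} [AddCommMonoid V] [SMul ℝ V] {Y : Set V} {ε t : ℝ} {y η : V}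

lemma mul_add_le_mul_average_of_concaveOn {f : V → ℝ} (hf : ConcaveOn ℝ Y f) (ht : 0 ≤ t)
    (hy : y ∈ Y) (hη : η ∈ Y) :
    t * f y + f η ≤ (t + 1) * f ((t / (t + 1)) • y + (1 / (t + 1)) • η) := by
  have jensen : t / (t + 1) * f y + 1 / (t + 1) * f η
      ≤ f ((t / (t + 1)) • y + (1 / (t + 1)) • η) :=
    hf.2 hy hη (by positivity) (by positivity) (by field_simp)
  calc t * f y + f η = (t + 1) * (t / (t + 1) * f y + 1 / (t + 1) * f η) := by field_simp
    _ ≤ _ := by gcongr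

lemma exp_neg_mul_average_le_of_concaveOn {f : V → ℝ} (hf : ConcaveOn ℝ Y f)
    (hε0 : 0 ≤ ε) (hε1 : ε ≤ 1) (ht : 0 ≤ t) (hy : y ∈ Y) (hη : η ∈ Y) (hfη : |f η| ≤ 1) :
    Real.exp (-(ε * (t + 1) / 2) * f ((t / (t + 1)) • y + (1 / (t + 1)) • η))
      ≤ Real.exp (-(ε * t / 2) * f y) * (1 + ε ^ 2 / 6 - ε / 2 * f η) := by
  have concave := mul_add_le_mul_average_of_concaveOn hf ht hy hη
  calc Real.exp (-(ε * (t + 1) / 2) * f ((t / (t + 1)) • y + (1 / (t + 1)) • η))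
      ≤ Real.exp (-(ε * t / 2) * f y + -(ε / 2) * f η) := by
        gcongr
        linarith [mul_le_mul_of_nonneg_left concave hε0]
    _ = Real.exp (-(ε * t / 2) * f y) * Real.exp (-(ε / 2) * f η) := Real.exp_add _ _
    _ ≤ Real.exp (-(ε * t / 2) * f y) * (1 + ε ^ 2 / 6 - ε / 2 * f η) := by
        gcongr
        exact exp_neg_half_mul_le (abs_le.mpr ⟨by linarith, hε1⟩) hfη

theorem stmt_6_general {Ω : Type*} [MeasurableSpace Ω] {μ : Measure Ω} {F : Ω → V → ℝ}
    (hYconv : Convex ℝ Y) (hFmeas : ∀ z ∈ Y, AEStronglyMeasurable (fun ξ => F ξ z) μ)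
    (hFconc : ∀ᵐ ξ ∂μ, ConcaveOn ℝ Y (F ξ)) (hε0 : 0 ≤ ε) (hε1 : ε ≤ 1) (ht : 0 ≤ t)
    (hy : y ∈ Y) (hη : η ∈ Y) (hFη : ∀ᵐ ξ ∂μ, |F ξ η| ≤ 1)
    (hint : Integrable (fun ξ => Real.exp (-(ε * t / 2) * F ξ y)) μ) :
    ∫ ξ, Real.exp (-(ε * (t + 1) / 2) * F ξ ((t / (t + 1)) • y + (1 / (t + 1)) • η)) ∂μ
      ≤ ∫ ξ, Real.exp (-(ε * t / 2) * F ξ y) * (1 + ε ^ 2 / 6 - ε / 2 * F ξ η) ∂μ := by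
  have hpointwise : ∀ᵐ ξ ∂μ,
      Real.exp (-(ε * (t + 1) / 2) * F ξ ((t / (t + 1)) • y + (1 / (t + 1)) • η))
        ≤ Real.exp (-(ε * t / 2) * F ξ y) * (1 + ε ^ 2 / 6 - ε / 2 * F ξ η) := by
    filter_upwards [hFconc, hFη] with ξ hconc hbd
    exact exp_neg_mul_average_le_of_concaveOn hconc hε0 hε1 ht hy hη hbd
  have hfactor : ∀ᵐ ξ ∂μ, ‖1 + ε ^ 2 / 6 - ε / 2 * F ξ η‖ ≤ 2 := by
    filter_upwards [hFη] with ξ hbd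
    rw [Real.norm_eq_abs]
    obtain ⟨hlower, hupper⟩ := abs_le.mp hbd
    exact abs_le.mpr ⟨by nlinarith, by nlinarith⟩
  have hright : Integrable
      (fun ξ => Real.exp (-(ε * t / 2) * F ξ y) * (1 + ε ^ 2 / 6 - ε / 2 * F ξ η)) μ :=
    hint.mul_bdd (aestronglyMeasurable_const.sub ((hFmeas η hη).const_mul _)) hfactor
  have haverage : (t / (t + 1)) • y + (1 / (t + 1)) • η ∈ Y :=
    hYconv hy hη (by positivity) (by positivity) (by field_simp)
  have hleft : Integrable (fun ξ =>
      Real.exp (-(ε * (t + 1) / 2) * F ξ ((t / (t + 1)) • y + (1 / (t + 1)) • η))) μ := by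
    refine hright.mono'
      (Real.continuous_exp.comp_aestronglyMeasurable ((hFmeas _ haverage).const_mul _)) ?_
    simpa only [Real.norm_eq_abs, Real.abs_exp] using hpointwise
  exact integral_mono_ae hleft hright hpointwise

end Average

/-- The one-step bound on the minimizer's potential `‖p(t+1)‖₁` from the proof of Lemma 1
of the paper, using concavity of `F(ξ,·)` and `e^δ ≤ 1 + δ + (2/3)δ²` for `|δ| ≤ 1/2`. -/
theorem stmt_6 {m n : ℕ} (X : Set (Fin m → ℝ)) (Y : Set (Fin n → ℝ))
    (hXne : X.Nonempty) (hXbd : Bornology.IsBounded X) (hXconv : Convex ℝ X)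
    (hX0 : 0 < volume X) (hXfin : volume X < ⊤)
    (hYconv : Convex ℝ Y)
    (F : (Fin m → ℝ) → (Fin n → ℝ) → ℝ)
    (hFcont : ContinuousOn (fun p : (Fin m → ℝ) × (Fin n → ℝ) => F p.1 p.2) (X ×ˢ Y))
    (hFbd : ∀ ξ ∈ X, ∀ η ∈ Y, |F ξ η| ≤ 1)
    (hFconc : ∀ ξ ∈ X, ConcaveOn ℝ Y fun η => F ξ η)
    (ε t : ℝ) (hε0 : 0 < ε) (hε1 : ε ≤ 1) (ht : 0 ≤ t)
    (y η : Fin n → ℝ) (hy : y ∈ Y) (hη : η ∈ Y) :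
    ∫ ξ in X, Real.exp (-(ε * (t + 1) / 2) *
        F ξ ((t / (t + 1)) • y + (1 / (t + 1)) • η))
      ≤ ∫ ξ in X, Real.exp (-(ε * t / 2) * F ξ y) *
        (1 + ε ^ 2 / 6 - ε / 2 * F ξ η) := by
  have : IsFiniteMeasure (volume.restrict X) := isFiniteMeasure_restrict.mpr hXfin.ne
  have hX : NullMeasurableSet X volume := hXconv.nullMeasurableSet volume
  have hmeas : ∀ z ∈ Y, AEMeasurable (fun ξ => F ξ z) (volume.restrict X) := fun z hz =>
    (hFcont.uncurry_right z hz).aemeasurable₀ hX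
  have hbd : ∀ z ∈ Y, ∀ᵐ ξ ∂volume.restrict X, |F ξ z| ≤ 1 := fun z hz =>
    (ae_restrict_mem₀ hX).mono fun ξ hξ => hFbd ξ hξ z hz
  exact stmt_6_general hYconv (fun z hz => (hmeas z hz).aestronglyMeasurable)
    ((ae_restrict_mem₀ hX).mono hFconc) hε0.le hε1 ht hy hη (hbd η hη)
    (ProbabilityTheory.integrable_exp_mul_of_mem_Icc (hmeas y hy)
      ((hbd y hy).mono fun _ => abs_le.mp))
end

section
/- Let X ⊆ ℝ^m and Y ⊆ ℝ^n be nonempty bounded convex sets of finite positive Lebesgue measure, and let F : X × Y → ℝ be a continuous convex-concave function with |F(ξ,η)| ≤ 1 for all (ξ,η). Let ε ∈ (0,1] and t ≥ 0 be reals and fix x ∈ X, y ∈ Y. Define p(ξ) = e^{−(εt/2) F(ξ, y)} for ξ ∈ X and q(η) = e^{(εt/2) F(x, η)} for η ∈ Y, with ‖p‖₁ = ∫_X p(ξ) dξ and ‖q‖₁ = ∫_Y q(η) dη, and for (ξ,η) ∈ X × Y define P(ξ,η) = ∫_X e^{−(ε(t+1)/2) F(ξ', (t y + η)/(t+1))}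 dξ' and Q(ξ,η) = ∫_Y e^{(ε(t+1)/2) F((t x + ξ)/(t+1), η')} dη'. Then ∫_X ∫_Y P(ξ,η) Q(ξ,η) p(ξ) q(η) dη dξ ≤ (1 + ε²/6)² ‖p‖₁² ‖q‖₁². -/
open MeasureTheory

/-!
Since `F ξ' ·` is concave, evaluating it at the running average `(t y + η) / (t + 1)` gives
`P(η) ≤ ∫ p(ξ') exp (-(ε / 2) F(ξ', η)) dξ'`; the dual bound on `Q(ξ)` comes from the convexity of
`F · η'`. As `P` depends on `η` only and `Q` on `ξ` only, the double integral of `P Q p q` splits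
into `(∫ P q) (∫ Q p)`, which is therefore at most
`(∬ w exp (-(ε / 2) F)) (∬ w exp ((ε / 2) F))`, with the same weight `w = p ⊗ q` in both factors.
By the AM-GM inequality this product is at most
`(∬ w cosh ((ε / 2) F)) ^ 2 ≤ cosh (ε / 2) ^ 2 (∬ w) ^ 2`.
-/

lemma cosh_half_le_one_add_sq_div_six {ε : ℝ} (hε : ε ^ 2 ≤ 2) :
    Real.cosh (ε / 2) ≤ 1 + ε ^ 2 / 6 :=
  calc Real.cosh (ε / 2) ≤ Real.exp (ε ^ 2 / 8) :=
        (Real.cosh_le_exp_half_sq _).trans_eq (by ring_nf)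
    _ ≤ 1 / (1 - ε ^ 2 / 8) :=
        Real.exp_bound_div_one_sub_of_interval (by positivity) (by linarith)
    _ ≤ 1 + ε ^ 2 / 6 := by
        rw [div_le_iff₀ (by linarith)]
        nlinarith [sq_nonneg ε]

section Convexity

variable {E : Type*} [AddCommGroup E] [Module ℝ E] {s : Set E} {f : E → ℝ} {x z : E} {t : ℝ}

lemma add_one_mul_average_le_of_convexOn (hf : ConvexOn ℝ s f) (hx : x ∈ s) (hz : z ∈ s)
    (ht : 0 ≤ t) :
    (t + 1) * f ((t + 1)⁻¹ • (t • x + z)) ≤ t * f x + f z := by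
  have hconv : f ((t + 1)⁻¹ • (t • x + z)) ≤ (t + 1)⁻¹ * t * f x + (t + 1)⁻¹ * f z := by
    simpa only [smul_add, mul_smul, smul_eq_mul, mul_assoc] using
      hf.2 hx hz (show 0 ≤ (t + 1)⁻¹ * t by positivity) (show 0 ≤ (t + 1)⁻¹ by positivity)
        (by field_simp)
  calc (t + 1) * f ((t + 1)⁻¹ • (t • x + z))
      ≤ (t + 1) * ((t + 1)⁻¹ * t * f x + (t + 1)⁻¹ * f z) := by gcongr
    _ = t * f x + f z := by field_simp

lemma exp_mul_average_le_of_convexOn (hf : ConvexOn ℝ s f) (hx : x ∈ s) (hz : z ∈ s)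
    (ht : 0 ≤ t) {ε : ℝ} (hε : 0 ≤ ε) :
    Real.exp (ε * (t + 1) / 2 * f ((t + 1)⁻¹ • (t • x + z))) ≤
      Real.exp (ε * t / 2 * f x) * Real.exp (ε / 2 * f z) := by
  rw [← Real.exp_add, Real.exp_le_exp]
  calc ε * (t + 1) / 2 * f ((t + 1)⁻¹ • (t • x + z))
      = ε / 2 * ((t + 1) * f ((t + 1)⁻¹ • (t • x + z))) := by ring
    _ ≤ ε / 2 * (t * f x + f z) := by
        gcongr
        exact add_one_mul_average_le_of_convexOn hf hx hz ht
    _ = ε * t / 2 * f x + ε / 2 * f z := by ring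

end Convexity

section Integrals

variable {α β : Type*} [MeasurableSpace α] [MeasurableSpace β] {μ : Measure α} {ν : Measure β}

lemma integrable_mul_exp_of_abs_le {w φ : α → ℝ} {c : ℝ} (hw : Integrable w μ)
    (hφ : AEStronglyMeasurable φ μ) (hφc : ∀ᵐ z ∂μ, |φ z| ≤ c) :
    Integrable (fun z => w z * Real.exp (φ z)) μ := by
  refine hw.mul_bdd (c := Real.exp c) (Real.continuous_exp.comp_aestronglyMeasurable hφ) ?_
  filter_upwards [hφc] with z hz
  rw [Real.norm_eq_abs, Real.abs_exp]
  exact Real.exp_le_exp.2 (le_of_abs_le hz)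

lemma integral_mul_exp_neg_mul_integral_mul_exp_le {w φ : α → ℝ} {c : ℝ} (hw : Integrable w μ)
    (hw0 : 0 ≤ᵐ[μ] w) (hφ : AEStronglyMeasurable φ μ) (hφc : ∀ᵐ z ∂μ, |φ z| ≤ c) :
    (∫ z, w z * Real.exp (-φ z) ∂μ) * (∫ z, w z * Real.exp (φ z) ∂μ) ≤
      Real.cosh c ^ 2 * (∫ z, w z ∂μ) ^ 2 := by
  have hint := integrable_mul_exp_of_abs_le hw hφ hφc
  have hint_neg : Integrable (fun z => w z * Real.exp (-φ z)) μ :=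
    integrable_mul_exp_of_abs_le hw hφ.neg (by simpa only [Pi.neg_apply, abs_neg] using hφc)
  set A := ∫ z, w z * Real.exp (-φ z) ∂μ
  set B := ∫ z, w z * Real.exp (φ z) ∂μ
  have hnonneg (g : α → ℝ) : 0 ≤ ∫ z, w z * Real.exp (g z) ∂μ :=
    integral_nonneg_of_ae (hw0.mono fun z hz => mul_nonneg hz (Real.exp_pos _).le)
  have hsum : A + B ≤ 2 * Real.cosh c * ∫ z, w z ∂μ := by
    rw [← integral_add hint_neg hint, ← integral_const_mul]
    refine integral_mono_ae (hint_neg.add hint) (hw.const_mul _) ?_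
    filter_upwards [hw0, hφc] with z hwz hz
    calc w z * Real.exp (-φ z) + w z * Real.exp (φ z) = 2 * Real.cosh (φ z) * w z := by
          rw [Real.cosh_eq]; ring
      _ ≤ 2 * Real.cosh c * w z := by
          have hcosh : Real.cosh (φ z) ≤ Real.cosh c :=
            Real.cosh_le_cosh.2 (hz.trans (le_abs_self c))
          gcongr
  have hsq : (A + B) ^ 2 ≤ (2 * Real.cosh c * ∫ z, w z ∂μ) ^ 2 :=
    pow_le_pow_left₀ (add_nonneg (hnonneg _) (hnonneg _)) hsum 2
  linarith [four_mul_le_sq_add A B]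

lemma integral_integral_le_integral_prod [SFinite μ] [SFinite ν] {f g : α × β → ℝ}
    (hf : 0 ≤ᵐ[μ.prod ν] f) (hg : Integrable g (μ.prod ν)) (hfg : f ≤ᵐ[μ.prod ν] g) :
    ∫ ξ, ∫ η, f (ξ, η) ∂ν ∂μ ≤ ∫ z, g z ∂(μ.prod ν) := by
  rw [integral_prod g hg]
  have hf' := Measure.ae_ae_of_ae_prod hf
  refine integral_mono_of_nonneg (hf'.mono fun ξ hξ => integral_nonneg_of_ae hξ)
    hg.integral_prod_left ?_
  filter_upwards [hf', Measure.ae_ae_of_ae_prod hfg, hg.prod_right_ae] with ξ hfξ hfgξ hgξ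
  exact integral_mono_of_nonneg hfξ hgξ hfgξ

lemma integral_integral_mul_mul_mul (a q : β → ℝ) (b p : α → ℝ) :
    ∫ ξ, ∫ η, a η * b ξ * (p ξ * q η) ∂ν ∂μ = (∫ η, a η * q η ∂ν) * ∫ ξ, b ξ * p ξ ∂μ := by
  have hsplit (ξ : α) (η : β) : a η * b ξ * (p ξ * q η) = a η * q η * (b ξ * p ξ) := by ring
  simp only [hsplit, integral_mul_const, integral_const_mul]

lemma aestronglyMeasurable_of_continuousOn {γ : Type*} [TopologicalSpace α]
    [OpensMeasurableSpace α] [TopologicalSpace γ] [TopologicalSpace.PseudoMetrizableSpace γ]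
    [SecondCountableTopologyEither α γ] {f : α → γ} {s : Set α} (hf : ContinuousOn f s)
    (hs : NullMeasurableSet s μ) : AEStronglyMeasurable f (μ.restrict s) := by
  obtain ⟨u, hus, hu, hae⟩ := hs.exists_measurable_subset_ae_eq
  rw [← Measure.restrict_congr_set hae]
  exact (hf.mono hus).aestronglyMeasurable hu

end Integrals

section Potential

variable {E G : Type*} [MeasurableSpace E] [MeasurableSpace G] {μ : Measure E} {ν : Measure G}
  {X : Set E} {Y : Set G} {F : E → G → ℝ} {x : E} {y : G} {ε t : ℝ}

lemma integral_integral_exp_mul_average_mul_le_of_convexOn [AddCommGroup E] [Module ℝ E]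
    [SFinite μ] [SFinite ν] {p : E → ℝ} (hX : ∀ᵐ ξ ∂μ, ξ ∈ X)
    (hF : ∀ᵐ η ∂ν, ConvexOn ℝ X fun ξ => F ξ η) (hp : ∀ ξ, 0 ≤ p ξ) (hε : 0 ≤ ε) (ht : 0 ≤ t)
    (hx : x ∈ X)
    (hint : Integrable (fun z : E × G =>
      p z.1 * Real.exp (ε * t / 2 * F x z.2) * Real.exp (ε / 2 * F z.1 z.2)) (μ.prod ν)) :
    ∫ ξ, (∫ η, Real.exp (ε * (t + 1) / 2 * F ((t + 1)⁻¹ • (t • x + ξ)) η) ∂ν) * p ξ ∂μ ≤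
      ∫ z, p z.1 * Real.exp (ε * t / 2 * F x z.2) * Real.exp (ε / 2 * F z.1 z.2) ∂(μ.prod ν) := by
  simp only [← integral_mul_const]
  refine integral_integral_le_integral_prod (f := fun z =>
      Real.exp (ε * (t + 1) / 2 * F ((t + 1)⁻¹ • (t • x + z.1)) z.2) * p z.1)
    (.of_forall fun z => mul_nonneg (Real.exp_pos _).le (hp z.1)) hint ?_
  filter_upwards [Measure.quasiMeasurePreserving_fst.ae hX,
    Measure.quasiMeasurePreserving_snd.ae hF] with z hzX hzF
  rw [mul_comm, mul_assoc]
  exact mul_le_mul_of_nonneg_left (exp_mul_average_le_of_convexOn hzF hx hzX ht hε) (hp z.1)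

lemma integral_integral_exp_neg_mul_average_mul_le_of_concaveOn [AddCommGroup G] [Module ℝ G]
    [SFinite μ] [SFinite ν] {q : G → ℝ} (hY : ∀ᵐ η ∂ν, η ∈ Y)
    (hF : ∀ᵐ ξ ∂μ, ConcaveOn ℝ Y (F ξ)) (hq : ∀ η, 0 ≤ q η) (hε : 0 ≤ ε) (ht : 0 ≤ t)
    (hy : y ∈ Y)
    (hint : Integrable (fun z : E × G =>
      Real.exp (-(ε * t / 2) * F z.1 y) * q z.2 * Real.exp (-(ε / 2 * F z.1 z.2))) (μ.prod ν)) :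
    ∫ η, (∫ ξ, Real.exp (-(ε * (t + 1) / 2) * F ξ ((t + 1)⁻¹ • (t • y + η))) ∂μ) * q η ∂ν ≤
      ∫ z, Real.exp (-(ε * t / 2) * F z.1 y) * q z.2 * Real.exp (-(ε / 2 * F z.1 z.2))
        ∂(μ.prod ν) := by
  have hswap (z : G × E) : Real.exp (-(ε * t / 2) * F z.2 y) * q z.1 *
      Real.exp (-(ε / 2 * F z.2 z.1)) =
      q z.1 * Real.exp (ε * t / 2 * -F z.2 y) * Real.exp (ε / 2 * -F z.2 z.1) := by
    rw [mul_comm (Real.exp _), neg_mul_comm, mul_neg (ε / 2)]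
  rw [← integral_prod_swap]
  simp only [Prod.fst_swap, Prod.snd_swap, hswap]
  simpa only [neg_mul_comm] using
    integral_integral_exp_mul_average_mul_le_of_convexOn (F := fun η ξ => -F ξ η) hY
      (hF.mono fun _ hξ => hξ.neg) hq hε ht hy
      (hint.swap.congr (.of_forall fun z => hswap z))

theorem stmt_7_general [AddCommGroup E] [Module ℝ E] [AddCommGroup G] [Module ℝ G]
    [IsFiniteMeasure μ] [IsFiniteMeasure ν]
    (hX : ∀ᵐ ξ ∂μ, ξ ∈ X) (hY : ∀ᵐ η ∂ν, η ∈ Y)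
    (hF : AEStronglyMeasurable (fun z : E × G => F z.1 z.2) (μ.prod ν))
    (hFleft : ∀ η ∈ Y, AEStronglyMeasurable (fun ξ => F ξ η) μ)
    (hFright : ∀ ξ ∈ X, AEStronglyMeasurable (F ξ) ν)
    (hFconv : ∀ η ∈ Y, ConvexOn ℝ X fun ξ => F ξ η) (hFconc : ∀ ξ ∈ X, ConcaveOn ℝ Y (F ξ))
    (hFbd : ∀ ξ ∈ X, ∀ η ∈ Y, |F ξ η| ≤ 1) (hε : 0 ≤ ε) (ht : 0 ≤ t) (hx : x ∈ X) (hy : y ∈ Y) :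
    (∫ ξ, ∫ η,
        (∫ ξ', Real.exp (-(ε * (t + 1) / 2) * F ξ' ((t + 1)⁻¹ • (t • y + η))) ∂μ) *
          (∫ η', Real.exp (ε * (t + 1) / 2 * F ((t + 1)⁻¹ • (t • x + ξ)) η') ∂ν) *
          (Real.exp (-(ε * t / 2) * F ξ y) * Real.exp (ε * t / 2 * F x η)) ∂ν ∂μ)
      ≤ Real.cosh (ε / 2) ^ 2 * (∫ ξ, Real.exp (-(ε * t / 2) * F ξ y) ∂μ) ^ 2 *
        (∫ η, Real.exp (ε * t / 2 * F x η) ∂ν) ^ 2 := by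
  let p : E → ℝ := fun ξ => Real.exp (-(ε * t / 2) * F ξ y)
  let q : G → ℝ := fun η => Real.exp (ε * t / 2 * F x η)
  have hp : Integrable p μ := ProbabilityTheory.integrable_exp_mul_of_mem_Icc
    (hFleft y hy).aemeasurable (hX.mono fun ξ hξ => abs_le.1 (hFbd ξ hξ y hy))
  have hq : Integrable q ν := ProbabilityTheory.integrable_exp_mul_of_mem_Icc
    (hFright x hx).aemeasurable (hY.mono fun η hη => abs_le.1 (hFbd x hx η hη))
  have hw : Integrable (fun z : E × G => p z.1 * q z.2) (μ.prod ν) := hp.mul_prod hq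
  have hφ : AEStronglyMeasurable (fun z : E × G => ε / 2 * F z.1 z.2) (μ.prod ν) := hF.const_mul _
  have hφ_abs : ∀ᵐ z ∂(μ.prod ν), |ε / 2 * F z.1 z.2| ≤ ε / 2 := by
    filter_upwards [Measure.quasiMeasurePreserving_fst.ae hX,
      Measure.quasiMeasurePreserving_snd.ae hY] with z hzX hzY
    have hε' : 0 ≤ ε / 2 := by positivity
    rw [abs_mul, abs_of_nonneg hε']
    exact mul_le_of_le_one_right hε' (hFbd z.1 hzX z.2 hzY)
  have hQ : ∫ ξ, (∫ η', Real.exp (ε * (t + 1) / 2 * F ((t + 1)⁻¹ • (t • x + ξ)) η') ∂ν) * p ξ ∂μ ≤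
      ∫ z, p z.1 * q z.2 * Real.exp (ε / 2 * F z.1 z.2) ∂(μ.prod ν) :=
    integral_integral_exp_mul_average_mul_le_of_convexOn hX (hY.mono hFconv)
      (fun _ => (Real.exp_pos _).le) hε ht hx (integrable_mul_exp_of_abs_le hw hφ hφ_abs)
  have hP : ∫ η, (∫ ξ', Real.exp (-(ε * (t + 1) / 2) * F ξ' ((t + 1)⁻¹ • (t • y + η))) ∂μ) * q η ∂ν
      ≤ ∫ z, p z.1 * q z.2 * Real.exp (-(ε / 2 * F z.1 z.2)) ∂(μ.prod ν) :=
    integral_integral_exp_neg_mul_average_mul_le_of_concaveOn hY (hX.mono hFconc)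
      (fun _ => (Real.exp_pos _).le) hε ht hy
      (integrable_mul_exp_of_abs_le hw hφ.neg (by simpa only [Pi.neg_apply, abs_neg]))
  calc _ = _ := integral_integral_mul_mul_mul _ _ _ _
    _ ≤ _ := mul_le_mul hP hQ (by positivity) (by positivity)
    _ ≤ Real.cosh (ε / 2) ^ 2 * (∫ z, p z.1 * q z.2 ∂(μ.prod ν)) ^ 2 :=
        integral_mul_exp_neg_mul_integral_mul_exp_le hw
          (.of_forall fun z => by positivity) hφ hφ_abs
    _ = _ := by rw [integral_prod_mul, mul_pow, mul_assoc]

end Potential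

/-- The conditional form of Lemma 1 of the paper: when `ξ` and `η` are sampled
independently with densities proportional to `p` and `q`, the expected potential
`Φ(t+1) = P(ξ,η)·Q(ξ,η)` is at most `(1 + ε²/6)² Φ(t)`, where `Φ(t) = ‖p‖₁‖q‖₁`. -/
theorem stmt_7 {m n : ℕ} (X : Set (Fin m → ℝ)) (Y : Set (Fin n → ℝ))
    (hXne : X.Nonempty) (hYne : Y.Nonempty)
    (hXbd : Bornology.IsBounded X) (hYbd : Bornology.IsBounded Y)
    (hXconv : Convex ℝ X) (hYconv : Convex ℝ Y)
    (hX0 : 0 < volume X) (hXfin : volume X < ⊤)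
    (hY0 : 0 < volume Y) (hYfin : volume Y < ⊤)
    (F : (Fin m → ℝ) → (Fin n → ℝ) → ℝ)
    (hFcont : ContinuousOn (fun p : (Fin m → ℝ) × (Fin n → ℝ) => F p.1 p.2) (X ×ˢ Y))
    (hFconv : ∀ η ∈ Y, ConvexOn ℝ X fun ξ => F ξ η)
    (hFconc : ∀ ξ ∈ X, ConcaveOn ℝ Y fun η => F ξ η)
    (hFbd : ∀ ξ ∈ X, ∀ η ∈ Y, |F ξ η| ≤ 1)
    (ε t : ℝ) (hε0 : 0 < ε) (hε1 : ε ≤ 1) (ht : 0 ≤ t)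
    (x : Fin m → ℝ) (hx : x ∈ X) (y : Fin n → ℝ) (hy : y ∈ Y) :
    (∫ ξ in X, ∫ η in Y,
        (∫ ξ' in X, Real.exp (-(ε * (t + 1) / 2) * F ξ' ((t + 1)⁻¹ • (t • y + η)))) *
          (∫ η' in Y, Real.exp (ε * (t + 1) / 2 * F ((t + 1)⁻¹ • (t • x + ξ)) η')) *
          (Real.exp (-(ε * t / 2) * F ξ y) * Real.exp (ε * t / 2 * F x η)))
      ≤ (1 + ε ^ 2 / 6) ^ 2 * (∫ ξ in X, Real.exp (-(ε * t / 2) * F ξ y)) ^ 2 *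
        (∫ η in Y, Real.exp (ε * t / 2 * F x η)) ^ 2 := by
  have hXm := hXconv.nullMeasurableSet volume
  have hYm := hYconv.nullMeasurableSet volume
  have : IsFiniteMeasure (volume.restrict X) := isFiniteMeasure_restrict.2 hXfin.ne
  have : IsFiniteMeasure (volume.restrict Y) := isFiniteMeasure_restrict.2 hYfin.ne
  have hF : AEStronglyMeasurable (fun z : (Fin m → ℝ) × (Fin n → ℝ) => F z.1 z.2)
      ((volume.restrict X).prod (volume.restrict Y)) := by
    rw [Measure.prod_restrict]
    exact aestronglyMeasurable_of_continuousOn hFcont (hXm.prod hYm)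
  refine (stmt_7_general (ae_restrict_mem₀ hXm) (ae_restrict_mem₀ hYm) hF
    (fun η hη => aestronglyMeasurable_of_continuousOn (hFcont.uncurry_right η hη) hXm)
    (fun ξ hξ => aestronglyMeasurable_of_continuousOn (hFcont.uncurry_left ξ hξ) hYm)
    hFconv hFconc hFbd hε0.le ht hx hy).trans ?_
  have hcosh : Real.cosh (ε / 2) ≤ 1 + ε ^ 2 / 6 := cosh_half_le_one_add_sq_div_six (by nlinarith)
  gcongr
end

section
/- Let X ⊆ ℝ^m and Y ⊆ ℝ^n be measurable sets, and let F : X × Y → ℝ be a jointly measurable function with |F(ξ,η)| ≤ 1 for all (ξ,η). Let p, p̂ : X → ℝ≥0 and q, q̂ : Y → ℝ≥0 be integrable functions whose integrals ‖p‖₁, ‖p̂‖₁, ‖q‖₁, ‖q̂‖₁ (over X and Y respectively, with Lebesgue measure) are all positive, and let ε ∈ (0,1]. Assume that for every measurable X' ⊆ X, |∫_{X'} p̂ / ‖p̂‖₁ − ∫_{X'} p / ‖p‖₁| ≤ ε/4, and for every measurable Y' ⊆ Y, |∫_{Y'} q̂ / ‖q̂‖₁ − ∫_{Y'} q / ‖q‖₁|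 ≤ ε/4. Then |(1/(‖p̂‖₁ ‖q‖₁)) ∫_X ∫_Y p̂(ξ) q(η) F(ξ,η) dη dξ − (1/(‖q̂‖₁ ‖p‖₁)) ∫_X ∫_Y p(ξ) q̂(η) F(ξ,η) dη dξ| ≤ ε. -/
open MeasureTheory

/-!
The integral of a function bounded by `1` against a density is `1`-Lipschitz in the density for
the `L¹` distance, and the `L¹` distance of two densities is at most twice their total variation
distance. For the normalized densities,
`p̂ ⊗ q - p ⊗ q̂ = (p̂ - p) ⊗ q + p ⊗ (q - q̂)`,
where `q` and `p` have `L¹` norm `1`; each summand therefore has `L¹` norm at most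
`2 * (ε / 4)`.
-/

section

variable {α β : Type*} [MeasurableSpace α] [MeasurableSpace β] {μ : Measure α} {ν : Measure β}

theorem integral_abs_le_two_mul_of_forall_abs_setIntegral_le {d : α → ℝ} {δ : ℝ}
    (hd : Integrable d μ) (hδ : ∀ S, MeasurableSet S → |∫ x in S, d x ∂μ| ≤ δ) :
    ∫ x, |d x| ∂μ ≤ 2 * δ := by
  have hδ_null {S : Set α} (hS : NullMeasurableSet S μ) : |∫ x in S, d x ∂μ| ≤ δ := by
    obtain ⟨T, -, hT, hTS⟩ := hS.exists_measurable_superset_ae_eq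
    rw [← setIntegral_congr_set hTS]
    exact hδ T hT
  have hpos : |∫ x in {x | 0 ≤ d x}, d x ∂μ| ≤ δ :=
    hδ_null (nullMeasurableSet_le aemeasurable_const hd.aemeasurable)
  have hneg : |∫ x in {x | d x ≤ 0}, d x ∂μ| ≤ δ :=
    hδ_null (nullMeasurableSet_le hd.aemeasurable aemeasurable_const)
  calc ∫ x, |d x| ∂μ
      = ∫ x in {x | 0 ≤ d x}, d x ∂μ - ∫ x in {x | d x ≤ 0}, d x ∂μ :=
        integral_norm_eq_pos_sub_neg hd
    _ ≤ 2 * δ := by linarith [le_of_abs_le hpos, neg_le_of_abs_le hneg]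

theorem setIntegral_abs_div_sub_div_le_two_mul {X : Set α} (hX : MeasurableSet X) {f g : α → ℝ}
    {A B δ : ℝ} (hf : IntegrableOn f X μ) (hg : IntegrableOn g X μ)
    (hδ : ∀ S ⊆ X, MeasurableSet S →
      |(∫ x in S, f x ∂μ) / A - (∫ x in S, g x ∂μ) / B| ≤ δ) :
    ∫ x in X, |f x / A - g x / B| ∂μ ≤ 2 * δ := by
  refine integral_abs_le_two_mul_of_forall_abs_setIntegral_le
    ((hf.div_const A).sub (hg.div_const B)) fun S hS => ?_
  have hsub : S ∩ X ⊆ X := Set.inter_subset_right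
  rw [Measure.restrict_restrict hS, integral_sub ((hf.mono_set hsub).div_const A)
    ((hg.mono_set hsub).div_const B), integral_div, integral_div]
  exact hδ _ hsub (hS.inter hX)

theorem setIntegral_abs_div_setIntegral_self {X : Set α} (hX : MeasurableSet X) {f : α → ℝ}
    (hf : ∀ x ∈ X, 0 ≤ f x) (hpos : 0 < ∫ x in X, f x ∂μ) :
    ∫ x in X, |f x / ∫ y in X, f y ∂μ| ∂μ = 1 := by
  rw [setIntegral_congr_fun hX fun x hx => abs_of_nonneg (div_nonneg (hf x hx) hpos.le),
    integral_div, div_self hpos.ne']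

theorem abs_integral_mul_sub_integral_mul_le {F h h' : α → ℝ} {C : ℝ}
    (hF : AEStronglyMeasurable F μ) (hFC : ∀ᵐ x ∂μ, |F x| ≤ C)
    (hh : Integrable h μ) (hh' : Integrable h' μ) :
    |(∫ x, h x * F x ∂μ) - ∫ x, h' x * F x ∂μ| ≤ (∫ x, |h x - h' x| ∂μ) * C := by
  rw [← integral_sub (hh.mul_bdd hF hFC) (hh'.mul_bdd hF hFC), ← integral_mul_const]
  have hbound : ∀ᵐ x ∂μ, ‖h x * F x - h' x * F x‖ ≤ |h x - h' x| * C := by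
    filter_upwards [hFC] with x hx
    rw [← sub_mul, Real.norm_eq_abs, abs_mul]
    exact mul_le_mul_of_nonneg_left hx (abs_nonneg _)
  exact norm_integral_le_of_norm_le ((hh.sub hh').abs.mul_const C) hbound

variable [SFinite μ] [SFinite ν]

theorem integral_abs_prod_mul_sub_prod_mul_le {f f' : α → ℝ} {g g' : β → ℝ}
    (hf : Integrable f μ) (hf' : Integrable f' μ) (hg : Integrable g ν) (hg' : Integrable g' ν) :
    ∫ z, |f z.1 * g z.2 - f' z.1 * g' z.2| ∂μ.prod ν ≤
      (∫ x, |f x - f' x| ∂μ) * (∫ y, |g y| ∂ν) + (∫ x, |f' x| ∂μ) * ∫ y, |g' y - g y| ∂ν := by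
  have hfst : Integrable (fun z : α × β => |f z.1 - f' z.1| * |g z.2|) (μ.prod ν) :=
    (hf.sub hf').abs.mul_prod hg.abs
  have hsnd : Integrable (fun z : α × β => |f' z.1| * |g' z.2 - g z.2|) (μ.prod ν) :=
    hf'.abs.mul_prod (hg'.sub hg).abs
  rw [← integral_prod_mul, ← integral_prod_mul, ← integral_add hfst hsnd]
  refine integral_mono ((hf.mul_prod hg).sub (hf'.mul_prod hg')).abs (hfst.add hsnd) fun z => ?_
  calc |f z.1 * g z.2 - f' z.1 * g' z.2|
      = |(f z.1 - f' z.1) * g z.2 - f' z.1 * (g' z.2 - g z.2)| := by ring_nf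
    _ ≤ |f z.1 - f' z.1| * |g z.2| + |f' z.1| * |g' z.2 - g z.2| := by
      simpa only [abs_mul] using
        abs_sub ((f z.1 - f' z.1) * g z.2) (f' z.1 * (g' z.2 - g z.2))

theorem integral_integral_mul_mul_div {F : α → β → ℝ} {f : α → ℝ} {g : β → ℝ}
    (hfgF : Integrable (fun z : α × β => f z.1 * g z.2 * Function.uncurry F z) (μ.prod ν))
    (A B : ℝ) :
    (∫ x, ∫ y, f x * g y * F x y ∂ν ∂μ) / (A * B) =
      ∫ z, f z.1 / A * (g z.2 / B) * Function.uncurry F z ∂μ.prod ν := by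
  rw [integral_integral hfgF, ← integral_div]
  congr 1 with z
  rw [div_mul_div_comm, div_mul_eq_mul_div, Function.uncurry]

theorem stmt_9_general {X : Set α} {Y : Set β} (hX : MeasurableSet X) (hY : MeasurableSet Y)
    {F : α → β → ℝ}
    (hF : AEStronglyMeasurable (Function.uncurry F) ((μ.restrict X).prod (ν.restrict Y)))
    (hF_le : ∀ x ∈ X, ∀ y ∈ Y, |F x y| ≤ 1)
    {p phat : α → ℝ} {q qhat : β → ℝ} (hp_nn : ∀ x ∈ X, 0 ≤ p x) (hq_nn : ∀ y ∈ Y, 0 ≤ q y)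
    (hp : IntegrableOn p X μ) (hphat : IntegrableOn phat X μ)
    (hq : IntegrableOn q Y ν) (hqhat : IntegrableOn qhat Y ν)
    (hp_pos : 0 < ∫ x in X, p x ∂μ) (_hphat_ne : ∫ x in X, phat x ∂μ ≠ 0)
    (hq_pos : 0 < ∫ y in Y, q y ∂ν) (_hqhat_ne : ∫ y in Y, qhat y ∂ν ≠ 0) {δ δ' : ℝ}
    (hp_tv : ∀ S ⊆ X, MeasurableSet S →
      |(∫ x in S, phat x ∂μ) / (∫ x in X, phat x ∂μ) -
        (∫ x in S, p x ∂μ) / (∫ x in X, p x ∂μ)| ≤ δ)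
    (hq_tv : ∀ S ⊆ Y, MeasurableSet S →
      |(∫ y in S, qhat y ∂ν) / (∫ y in Y, qhat y ∂ν) -
        (∫ y in S, q y ∂ν) / (∫ y in Y, q y ∂ν)| ≤ δ') :
    |(∫ x in X, ∫ y in Y, phat x * q y * F x y ∂ν ∂μ) /
        ((∫ x in X, phat x ∂μ) * (∫ y in Y, q y ∂ν)) -
      (∫ x in X, ∫ y in Y, p x * qhat y * F x y ∂ν ∂μ) /
        ((∫ y in Y, qhat y ∂ν) * (∫ x in X, p x ∂μ))| ≤ 2 * (δ + δ') := by
  have hF_ae : ∀ᵐ z ∂(μ.restrict X).prod (ν.restrict Y), |Function.uncurry F z| ≤ 1 := by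
    rw [Measure.prod_restrict]
    exact ae_restrict_of_forall_mem (hX.prod hY) fun z hz => hF_le _ hz.1 _ hz.2
  have hpn := hp.div_const (∫ x in X, p x ∂μ)
  have hphatn := hphat.div_const (∫ x in X, phat x ∂μ)
  have hqn := hq.div_const (∫ y in Y, q y ∂ν)
  have hqhatn := hqhat.div_const (∫ y in Y, qhat y ∂ν)
  have hp_L1 := setIntegral_abs_div_sub_div_le_two_mul hX hphat hp hp_tv
  have hq_L1 := setIntegral_abs_div_sub_div_le_two_mul hY hqhat hq hq_tv
  rw [mul_comm (∫ y in Y, qhat y ∂ν),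
    integral_integral_mul_mul_div ((hphat.mul_prod hq).mul_bdd hF hF_ae),
    integral_integral_mul_mul_div ((hp.mul_prod hqhat).mul_bdd hF hF_ae)]
  refine (abs_integral_mul_sub_integral_mul_le hF hF_ae
    (hphatn.mul_prod hqn) (hpn.mul_prod hqhatn)).trans ?_
  rw [mul_one]
  refine (integral_abs_prod_mul_sub_prod_mul_le hphatn hpn hqn hqhatn).trans ?_
  rw [setIntegral_abs_div_setIntegral_self hY hq_nn hq_pos,
    setIntegral_abs_div_setIntegral_self hX hp_nn hp_pos]
  linarith

end

/-- Proposition 1 of the paper: when the approximate sampling distributions are within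
total variation distance `ε/4` of the exact ones, the two mixed expectations of the
bounded payoff `F` differ by at most `ε`. -/
theorem stmt_9 {m n : ℕ} (X : Set (Fin m → ℝ)) (Y : Set (Fin n → ℝ))
    (hX : MeasurableSet X) (hY : MeasurableSet Y)
    (F : (Fin m → ℝ) → (Fin n → ℝ) → ℝ)
    (hFmeas : Measurable (fun z : (Fin m → ℝ) × (Fin n → ℝ) => F z.1 z.2))
    (hFbd : ∀ ξ ∈ X, ∀ η ∈ Y, |F ξ η| ≤ 1)
    (p phat : (Fin m → ℝ) → ℝ) (q qhat : (Fin n → ℝ) → ℝ)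
    (hp_nn : ∀ ξ ∈ X, 0 ≤ p ξ) (hphat_nn : ∀ ξ ∈ X, 0 ≤ phat ξ)
    (hq_nn : ∀ η ∈ Y, 0 ≤ q η) (hqhat_nn : ∀ η ∈ Y, 0 ≤ qhat η)
    (hp_int : IntegrableOn p X volume) (hphat_int : IntegrableOn phat X volume)
    (hq_int : IntegrableOn q Y volume) (hqhat_int : IntegrableOn qhat Y volume)
    (hp_pos : 0 < ∫ ξ in X, p ξ) (hphat_pos : 0 < ∫ ξ in X, phat ξ)
    (hq_pos : 0 < ∫ η in Y, q η) (hqhat_pos : 0 < ∫ η in Y, qhat η)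
    (ε : ℝ) (hε0 : 0 < ε) (hε1 : ε ≤ 1)
    (hp_tv : ∀ X' ⊆ X, MeasurableSet X' →
      |(∫ ξ in X', phat ξ) / (∫ ξ in X, phat ξ) -
        (∫ ξ in X', p ξ) / (∫ ξ in X, p ξ)| ≤ ε / 4)
    (hq_tv : ∀ Y' ⊆ Y, MeasurableSet Y' →
      |(∫ η in Y', qhat η) / (∫ η in Y, qhat η) -
        (∫ η in Y', q η) / (∫ η in Y, q η)| ≤ ε / 4) :
    |(∫ ξ in X, ∫ η in Y, phat ξ * q η * F ξ η) /
        ((∫ ξ in X, phat ξ) * (∫ η in Y, q η)) -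
      (∫ ξ in X, ∫ η in Y, p ξ * qhat η * F ξ η) /
        ((∫ η in Y, qhat η) * (∫ ξ in X, p ξ))| ≤ ε :=
  (stmt_9_general hX hY hFmeas.aestronglyMeasurable hFbd hp_nn hq_nn hp_int hphat_int hq_int
    hqhat_int hp_pos hphat_pos.ne' hq_pos hqhat_pos.ne' hp_tv hq_tv).trans_eq (by ring)
end
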